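/- Grain Inference for Equi-Joins, Case B (uniqueness): Let S1, S2, Jk be field sets with Jk ⊆ S1 and Jk ⊆ S2, let K1 ⊆ S1 be a grain of a collection D1 over S1, and let K2 ⊆ S2 be a grain of a collection D2 over S2. Then, without any comparability hypothesis on the Jk-portions, the map sending a join pair (r1, r2) to the triple consisting of the restriction of r1 to K1 \ Jk, the restriction of r2 to K2 \ Jk, and the restriction of r1 to (K1 ∪ K2) ∩ Jk, is injective on the equi-join of D1 and D2 on Jk; that is, the fields (K1 \ Jk) ∪ (K2 \ Jk) ∪ ((K1 ∪ K2) ∩ Jk) uniquely identify the elements of the join result. -/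

import Mathlib

/-- Restriction of a record over `S` to a subset `T ⊆ S`. -/
def restr {Attr : Type*} {V : Attr → Type*} {S T : Set Attr} (h : T ⊆ S)
    (r : (a : ↥S) → V a) : (a : ↥T) → V a :=
  fun a => r ⟨a.1, h a.2⟩

/-- The equi-join of collections `D1` over `S1` and `D2` over `S2` on a common
field set `Jk`. -/
def equiJoin {Attr : Type*} {V : Attr → Type*} {S1 S2 Jk : Set Attr}
    (hJ1 : Jk ⊆ S1) (hJ2 : Jk ⊆ S2)
    (D1 : Set ((a : ↥S1) → V a)) (D2 : Set ((a : ↥S2) → V a)) :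
    Set (((a : ↥S1) → V a) × ((a : ↥S2) → V a)) :=
  {p | p.1 ∈ D1 ∧ p.2 ∈ D2 ∧ restr hJ1 p.1 = restr hJ2 p.2}

section Restriction

variable {Attr : Type*} {V : Attr → Type*} {S T U : Set Attr} {r s : (a : ↥S) → V a}

theorem restr_eq_restr_mono (hUT : U ⊆ T) (hT : T ⊆ S) (h : restr hT r = restr hT s) :
    restr (hUT.trans hT) r = restr (hUT.trans hT) s :=
  congrArg (restr hUT) h

theorem restr_eq_restr_of_sdiff_of_inter (hT : T ⊆ S)
    (hsdiff : restr (Set.sdiff_subset.trans hT : T \ U ⊆ S) r =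
      restr (Set.sdiff_subset.trans hT) s)
    (hinter : restr (Set.inter_subset_left.trans hT : T ∩ U ⊆ S) r =
      restr (Set.inter_subset_left.trans hT) s) :
    restr hT r = restr hT s := by
  funext ⟨a, haT⟩
  by_cases haU : a ∈ U
  · exact congrFun hinter ⟨a, haT, haU⟩
  · exact congrFun hsdiff ⟨a, haT, haU⟩

end Restriction

theorem restr_fst_eq_restr_snd_of_mem_equiJoin {Attr : Type*} {V : Attr → Type*}
    {S1 S2 Jk T : Set Attr} {hJ1 : Jk ⊆ S1} {hJ2 : Jk ⊆ S2}
    {D1 : Set ((a : ↥S1) → V a)} {D2 : Set ((a : ↥S2) → V a)}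
    {p : ((a : ↥S1) → V a) × ((a : ↥S2) → V a)}
    (hT : T ⊆ Jk) (hp : p ∈ equiJoin hJ1 hJ2 D1 D2) :
    restr (hT.trans hJ1) p.1 = restr (hT.trans hJ2) p.2 :=
  congrArg (restr hT) hp.2.2

/-- Grain Inference for Equi-Joins, Case B (uniqueness): without any comparability
hypothesis on the `Jk`-portions, the fields `(K1 \ Jk) ∪ (K2 \ Jk) ∪ ((K1 ∪ K2) ∩ Jk)`
uniquely identify equi-join results. -/
theorem equijoin_grain_caseB {Attr : Type*} {V : Attr → Type*}
    {S1 S2 Jk K1 K2 : Set Attr}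
    (hJ1 : Jk ⊆ S1) (hJ2 : Jk ⊆ S2) (hK1 : K1 ⊆ S1) (hK2 : K2 ⊆ S2)
    {D1 : Set ((a : ↥S1) → V a)} {D2 : Set ((a : ↥S2) → V a)}
    (hg1 : Set.InjOn (restr hK1) D1) (hg2 : Set.InjOn (restr hK2) D2) :
    Set.InjOn
      (fun p : ((a : ↥S1) → V a) × ((a : ↥S2) → V a) =>
        (restr (show K1 \ Jk ⊆ S1 from Set.diff_subset.trans hK1) p.1,
         restr (show K2 \ Jk ⊆ S2 from Set.diff_subset.trans hK2) p.2,
         restr (show (K1 ∪ K2) ∩ Jk ⊆ S1 from Set.inter_subset_right.trans hJ1) p.1))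
      (equiJoin hJ1 hJ2 D1 D2) := by
  intro p hp q hq hpq
  simp only [Prod.mk.injEq] at hpq
  obtain ⟨hsdiff1, hsdiff2, hfst⟩ := hpq
  have hJk : (K1 ∪ K2) ∩ Jk ⊆ Jk := Set.inter_subset_right
  -- Joined records agree on `Jk`, so the third component also determines that part of `p.2`.
  have hsnd : restr (hJk.trans hJ2) p.2 = restr (hJk.trans hJ2) q.2 :=
    calc restr (hJk.trans hJ2) p.2
      _ = restr (hJk.trans hJ1) p.1 := (restr_fst_eq_restr_snd_of_mem_equiJoin hJk hp).symm
      _ = restr (hJk.trans hJ1) q.1 := hfst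
      _ = restr (hJk.trans hJ2) q.2 := restr_fst_eq_restr_snd_of_mem_equiJoin hJk hq
  have hK1_eq : restr hK1 p.1 = restr hK1 q.1 :=
    restr_eq_restr_of_sdiff_of_inter hK1 hsdiff1 <|
      restr_eq_restr_mono (Set.inter_subset_inter_left Jk Set.subset_union_left) _ hfst
  have hK2_eq : restr hK2 p.2 = restr hK2 q.2 :=
    restr_eq_restr_of_sdiff_of_inter hK2 hsdiff2 <|
      restr_eq_restr_mono (Set.inter_subset_inter_left Jk Set.subset_union_right) _ hsnd
  exact Prod.ext (hg1 hp.1 hq.1 hK1_eq) (hg2 hp.2.1 hq.2.1 hK2_eq)
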